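/- In a finite simple graph of arboricity α, the number of edges {u,v} such that both deg(u) ≥ d and deg(v) ≥ d is at most 2·m·α / d for any d > 0. -/

import Mathlib

/-- The minimum of the degrees of the two endpoints of an edge. -/
def minDeg {V : Type*} [Fintype V] (G : SimpleGraph V) [DecidableRel G.Adj]
    (e : Sym2 V) : ℕ :=
  Sym2.lift ⟨fun u v => min (G.degree u) (G.degree v), fun _ _ => min_comm _ _⟩ e

open Classical in
lemma acyclic_card_edges_le {W : Type*} [Fintype W] (H : SimpleGraph W) (h : H.IsAcyclic) :
    H.edgeFinset.card ≤ Fintype.card W := by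
  rcases isEmpty_or_nonempty W with hW | hW
  · rw [Finset.card_eq_zero.2]
    · exact Nat.zero_le _
    · ext e
      induction e with
      | _ u v => exact (hW.false u).elim
  · obtain ⟨T, hT1, hT2, hT⟩ :=
      (SimpleGraph.connected_top (V := W)).exists_isTree_le_of_le_of_isAcyclic le_top h
    have h1 := hT.card_edgeFinset
    have h2 : H.edgeFinset.card ≤ T.edgeFinset.card :=
      Finset.card_le_card (SimpleGraph.edgeFinset_mono (by assumption))
    omega

/-- In a graph whose edges decompose into `α` forests, for any `d > 0` the number of
edges both of whose endpoints have degree at least `d` is at most `2 * m * α / d`. -/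
theorem card_heavy_edges_le
    {V : Type*} [Fintype V] [DecidableEq V] (G : SimpleGraph V) [DecidableRel G.Adj]
    (α : ℕ) (F : Fin α → SimpleGraph V)
    (hle : ∀ i, F i ≤ G)
    (hforest : ∀ i, (F i).IsAcyclic)
    (hpart : ∀ e ∈ G.edgeSet, ∃! i, e ∈ (F i).edgeSet)
    (d : ℕ) (hd : 0 < d) :
    ((G.edgeFinset.filter (fun e => d ≤ minDeg G e)).card : ℝ) ≤
      2 * G.edgeFinset.card * α / d := by
  classical
  set S : Finset V := Finset.univ.filter (fun v => d ≤ G.degree v) with hS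
  have hdeg : d * S.card ≤ 2 * G.edgeFinset.card := by
    rw [← G.sum_degrees_eq_twice_card_edges]
    calc d * S.card = ∑ v ∈ S, d := by simp [mul_comm]
      _ ≤ ∑ v ∈ S, G.degree v := Finset.sum_le_sum (fun v hv => (Finset.mem_filter.1 hv).2)
      _ ≤ ∑ v, G.degree v := Finset.sum_le_sum_of_subset (Finset.subset_univ _)
  have hsub : G.edgeFinset.filter (fun e => d ≤ minDeg G e) ⊆
      (Finset.univ : Finset (Fin α)).biUnion (fun i =>
        ((F i).induce (fun v => v ∈ S)).edgeFinset.image (Sym2.map Subtype.val)) := by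
    intro e he
    rw [Finset.mem_filter, SimpleGraph.mem_edgeFinset] at he
    obtain ⟨he, hm⟩ := he
    obtain ⟨i, hi, -⟩ := hpart e he
    induction e with
    | _ u v =>
      have hm' : d ≤ min (G.degree u) (G.degree v) := hm
      have hu : u ∈ S := Finset.mem_filter.2 ⟨Finset.mem_univ _, (le_min_iff.1 hm').1⟩
      have hv : v ∈ S := Finset.mem_filter.2 ⟨Finset.mem_univ _, (le_min_iff.1 hm').2⟩
      refine Finset.mem_biUnion.2 ⟨i, Finset.mem_univ _, Finset.mem_image.2
        ⟨s(⟨u, hu⟩, ⟨v, hv⟩), ?_, rfl⟩⟩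
      rw [SimpleGraph.mem_edgeFinset]
      exact hi
  have hcard : (G.edgeFinset.filter (fun e => d ≤ minDeg G e)).card ≤ α * S.card := by
    refine (Finset.card_le_card hsub).trans (Finset.card_biUnion_le.trans ?_)
    refine (Finset.sum_le_card_nsmul _ _ S.card ?_).trans (by simp)
    intro i _
    refine Finset.card_image_le.trans ?_
    have := acyclic_card_edges_le _ ((hforest i).induce (fun v => v ∈ S))
    refine le_trans (le_of_eq ?_) (this.trans (le_of_eq ?_))
    · congr!
    · rw [← Fintype.card_coe S]
      exact Fintype.card_congr (Equiv.subtypeEquivRight (fun _ => Iff.rfl))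
  rw [le_div_iff₀ (by exact_mod_cast hd)]
  have : (G.edgeFinset.filter (fun e => d ≤ minDeg G e)).card * d ≤
      2 * G.edgeFinset.card * α := by
    calc _ ≤ α * S.card * d := Nat.mul_le_mul_right _ hcard
      _ = d * S.card * α := by ring
      _ ≤ _ := Nat.mul_le_mul_right _ hdeg
  exact_mod_cast this
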